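/- arXiv:2505.00790 — 3 statements merged into one kernel-verified Lean document; each statement's English description precedes it below -/
import Mathlib

section
/- Area integrals of the Goh variation builder (Lemma 3.5). For every pair 1 ≤ i < j ≤ m and all α^i, α^j, β^i, β^j > 0, with r := (α^i)^{-1} + (α^j)^{-1} + (β^i)^{-1} + (β^j)^{-1}: (a) ∫_0^1 Γ^i_{(i,j)}(t) γ^j_{(i,j)}(t) dt = 1/(2r²) (this integral is the signed area Area(Γ^i_{(i,j)}, Γ^j_{(i,j)}) of the closed plane curve (Γ^i_{(i,j)}, Γ^j_{(i,j)})), and consequently ∫_0^1 Γ^j_{(i,j)}(t) γ^i_{(i,j)}(t) dt = −1/(2r²); (b) for every h ∈ {0,…,m}\{i,j} (with γ^0_{(i,j)} := 0), ∫_0^1 Γ^i_{(i,j)}(t) γ^h_{(i,j)}(t) dt = 0 = ∫_0^1 Γ^j_{(i,j)}(t) γ^h_{(i,j)}(t) dt. -/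
open MeasureTheory Set Filter Topology

/-- The Goh variation builder `γ_{(i,j)}`. -/
noncomputable def gohBuilder {m : ℕ} (i j : Fin m) (αi αj βi βj : ℝ) : ℝ → Fin m → ℝ :=
  let r : ℝ := αi⁻¹ + αj⁻¹ + βi⁻¹ + βj⁻¹
  let τ1 : ℝ := αi⁻¹ / (2 * r)
  let τ2 : ℝ := τ1 + αj⁻¹ / (2 * r)
  let τ3 : ℝ := τ2 + βi⁻¹ / (2 * r)
  let γhat : ℝ → Fin m → ℝ := fun s =>
    if s ≤ τ1 then αi • (Pi.single i 1 : Fin m → ℝ)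
    else if s ≤ τ2 then αj • (Pi.single j 1 : Fin m → ℝ)
    else if s ≤ τ3 then (-βi) • (Pi.single i 1 : Fin m → ℝ)
    else (-βj) • (Pi.single j 1 : Fin m → ℝ)
  fun s => if s ≤ 1/2 then γhat s else -γhat (s - 1/2)

/-- Its primitive `Γ_{(i,j)}(s) = ∫₀ˢ γ_{(i,j)}`. -/
noncomputable def gohPrimitive {m : ℕ} (i j : Fin m) (αi αj βi βj : ℝ) (s : ℝ) : Fin m → ℝ :=
  ∫ σ in (0:ℝ)..s, gohBuilder i j αi αj βi βj σ

/-- State of the integration up to time `a`. -/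
def GohSt {m : ℕ} (f : ℝ → Fin m → ℝ) (p q : Fin m) (a w A : ℝ) : Prop :=
  IntervalIntegrable f volume 0 a ∧ (∫ σ in (0:ℝ)..a, f σ) p = w ∧
  IntervalIntegrable (fun t => (∫ σ in (0:ℝ)..t, f σ) p * f t q) volume 0 a ∧
  (∫ t in (0:ℝ)..a, (∫ σ in (0:ℝ)..t, f σ) p * f t q) = A

theorem goh_const {E : Type*} [NormedAddCommGroup E] [NormedSpace ℝ E] [CompleteSpace E]
    (f : ℝ → E) (a b : ℝ) (v : E) (hab : a ≤ b)
    (hf : ∀ s, a < s → s ≤ b → f s = v) :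
    IntervalIntegrable f volume a b ∧ (∫ σ in a..b, f σ) = (b - a) • v := by
  have h : ∀ s ∈ Set.uIoc a b, f s = v := by
    intro s hs
    rw [Set.uIoc_of_le hab] at hs
    exact hf s hs.1 hs.2
  constructor
  · refine (intervalIntegrable_const (c := v)).congr ?_
    intro s hs
    exact (h s hs).symm
  · rw [intervalIntegral.integral_congr_ae (g := fun _ => v) (Filter.Eventually.of_forall h)]
    simp

set_option linter.unusedSimpArgs false

theorem GohSt.step {m : ℕ} {f : ℝ → Fin m → ℝ} {p q : Fin m} {a w A : ℝ}
    (H : GohSt f p q a w A) (b : ℝ) (v : Fin m → ℝ) (w' A' : ℝ) (hab : a ≤ b)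
    (hf : ∀ s, a < s → s ≤ b → f s = v) (hv : v p * v q = 0)
    (hw : w' = w + (b - a) * v p) (hA : A' = A + (b - a) * (w * v q)) :
    GohSt f p q b w' A' := by
  obtain ⟨h1, h2, h3, h4⟩ := H
  have key : ∀ t, a ≤ t → t ≤ b → IntervalIntegrable f volume a t ∧
      (∫ σ in (0:ℝ)..t, f σ) p = w + (t - a) * v p := by
    intro t hat htb
    have := goh_const f a t v hat (fun s hs hs' => hf s hs (hs'.trans htb))
    refine ⟨this.1, ?_⟩
    rw [← intervalIntegral.integral_add_adjacent_intervals h1 this.1, this.2]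
    simp [h2]
  have k2 := goh_const (fun t => (∫ σ in (0:ℝ)..t, f σ) p * f t q) a b (w * v q) hab (by
    intro s hs hs'
    rw [(key s hs.le hs').2, hf s hs hs']
    linear_combination (s - a) * hv)
  have k1 := key b hab le_rfl
  refine ⟨h1.trans k1.1, k1.2.trans hw.symm, h3.trans k2.1, ?_⟩
  rw [← intervalIntegral.integral_add_adjacent_intervals h3 k2.1, h4, k2.2, hA]
  simp

theorem GohSt.init {m : ℕ} (f : ℝ → Fin m → ℝ) (p q : Fin m) : GohSt f p q 0 0 0 := by
  simp [GohSt]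

/-- **Area integrals of the Goh variation builder** (Lemma 3.5).
The integral `∫₀¹ Γⁱ (Γʲ)' dt` is the signed area encircled by the closed plane curve
`(Γⁱ, Γʲ)`, and it equals `1/(2r²)`; the components with index `h ∉ {i,j}` (including the
"time" component `h = 0`, for which `γ⁰ := 0`) give vanishing area integrals. -/
theorem goh_builder_area_integrals
    {m : ℕ} (i j : Fin m) (hij : i < j)
    (αi αj βi βj : ℝ) (hαi : 0 < αi) (hαj : 0 < αj) (hβi : 0 < βi) (hβj : 0 < βj) :
    -- (a) the area integral in positions (i,j) and (j,i)
    (∫ t in (0:ℝ)..1, gohPrimitive i j αi αj βi βj t i * gohBuilder i j αi αj βi βj t j) =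
        1 / (2 * (αi⁻¹ + αj⁻¹ + βi⁻¹ + βj⁻¹) ^ 2) ∧
    (∫ t in (0:ℝ)..1, gohPrimitive i j αi αj βi βj t j * gohBuilder i j αi αj βi βj t i) =
        -(1 / (2 * (αi⁻¹ + αj⁻¹ + βi⁻¹ + βj⁻¹) ^ 2)) ∧
    -- (b) the components `h ∈ {1,…,m} \ {i,j}`
    (∀ h : Fin m, h ≠ i → h ≠ j →
      (∫ t in (0:ℝ)..1, gohPrimitive i j αi αj βi βj t i * gohBuilder i j αi αj βi βj t h) = 0 ∧
      (∫ t in (0:ℝ)..1, gohPrimitive i j αi αj βi βj t j * gohBuilder i j αi αj βi βj t h) = 0) ∧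
    -- (b) the "time" component `h = 0`, with `γ⁰ := 0`
    (∫ t in (0:ℝ)..1, gohPrimitive i j αi αj βi βj t i * (0:ℝ)) = 0 ∧
    (∫ t in (0:ℝ)..1, gohPrimitive i j αi αj βi βj t j * (0:ℝ)) = 0 := by
  have hne : i ≠ j := hij.ne
  have hne' : j ≠ i := hij.ne'
  refine ⟨?_, ?_, ?_, by simp, by simp⟩
  rotate_left 2
  · intro h hi hj
    have h0 : ∀ t, gohBuilder i j αi αj βi βj t h = 0 := by
      intro t
      simp only [gohBuilder]
      split_ifs <;> simp [hi, hj]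
    simp [h0]
  all_goals
    obtain ⟨r, hr⟩ : ∃ r, r = αi⁻¹ + αj⁻¹ + βi⁻¹ + βj⁻¹ := ⟨_, rfl⟩
    have hr0 : 0 < r := by rw [hr]; positivity
    obtain ⟨a, ha⟩ : ∃ a, a = αi⁻¹ / (2 * r) := ⟨_, rfl⟩
    obtain ⟨b, hb⟩ : ∃ b, b = αj⁻¹ / (2 * r) := ⟨_, rfl⟩
    obtain ⟨c, hc⟩ : ∃ c, c = βi⁻¹ / (2 * r) := ⟨_, rfl⟩
    obtain ⟨d, hd⟩ : ∃ d, d = βj⁻¹ / (2 * r) := ⟨_, rfl⟩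
    obtain ⟨e, he⟩ : ∃ e, e = 1 / (2 * r) := ⟨_, rfl⟩
    have a0 : 0 < a := by rw [ha]; positivity
    have b0 : 0 < b := by rw [hb]; positivity
    have c0 : 0 < c := by rw [hc]; positivity
    have d0 : 0 < d := by rw [hd]; positivity
    have ae : a * αi = e := by rw [ha, he]; field_simp
    have be : b * αj = e := by rw [hb, he]; field_simp
    have ce : c * βi = e := by rw [hc, he]; field_simp
    have de : d * βj = e := by rw [hd, he]; field_simp
    have hs : a + b + c + d = 1 / 2 := by
      rw [ha, hb, hc, hd, ← add_div, ← add_div, ← add_div, ← hr]; field_simp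
    have hE : 1 / (2 * r ^ 2) = 2 * e ^ 2 := by rw [he]; field_simp
    rw [← hr, hE]
    have hf : ∀ s, gohBuilder i j αi αj βi βj s =
        if s ≤ 1/2 then (if s ≤ a then αi • (Pi.single i 1 : Fin m → ℝ)
          else if s ≤ a + b then αj • (Pi.single j 1 : Fin m → ℝ)
          else if s ≤ a + b + c then (-βi) • (Pi.single i 1 : Fin m → ℝ)
          else (-βj) • (Pi.single j 1 : Fin m → ℝ))
        else -(if s - 1/2 ≤ a then αi • (Pi.single i 1 : Fin m → ℝ)
          else if s - 1/2 ≤ a + b then αj • (Pi.single j 1 : Fin m → ℝ)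
          else if s - 1/2 ≤ a + b + c then (-βi) • (Pi.single i 1 : Fin m → ℝ)
          else (-βj) • (Pi.single j 1 : Fin m → ℝ)) := by
      intro s
      simp only [gohBuilder, ← hr, ← ha, ← hb, ← hc]
    unfold gohPrimitive
    generalize gohBuilder i j αi αj βi βj = f at hf ⊢
    have f1 : ∀ s, 0 < s → s ≤ a → f s = αi • (Pi.single i 1 : Fin m → ℝ) := by
      intro s h1 h2
      rw [hf, if_pos (by linarith), if_pos (by linarith)]
    have f2 : ∀ s, a < s → s ≤ a + b → f s = αj • (Pi.single j 1 : Fin m → ℝ) := by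
      intro s h1 h2
      rw [hf, if_pos (by linarith), if_neg (by linarith), if_pos (by linarith)]
    have f3 : ∀ s, a + b < s → s ≤ a + b + c → f s = (-βi) • (Pi.single i 1 : Fin m → ℝ) := by
      intro s h1 h2
      rw [hf, if_pos (by linarith), if_neg (by linarith), if_neg (by linarith),
        if_pos (by linarith)]
    have f4 : ∀ s, a + b + c < s → s ≤ 1/2 → f s = (-βj) • (Pi.single j 1 : Fin m → ℝ) := by
      intro s h1 h2
      rw [hf, if_pos (by linarith), if_neg (by linarith), if_neg (by linarith),
        if_neg (by linarith)]
    have f5 : ∀ s, 1/2 < s → s ≤ 1/2 + a → f s = -(αi • (Pi.single i 1 : Fin m → ℝ)) := by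
      intro s h1 h2
      rw [hf, if_neg (by linarith), if_pos (by linarith)]
    have f6 : ∀ s, 1/2 + a < s → s ≤ 1/2 + (a + b) →
        f s = -(αj • (Pi.single j 1 : Fin m → ℝ)) := by
      intro s h1 h2
      rw [hf, if_neg (by linarith), if_neg (by linarith), if_pos (by linarith)]
    have f7 : ∀ s, 1/2 + (a + b) < s → s ≤ 1/2 + (a + b + c) →
        f s = -((-βi) • (Pi.single i 1 : Fin m → ℝ)) := by
      intro s h1 h2
      rw [hf, if_neg (by linarith), if_neg (by linarith), if_neg (by linarith),
        if_pos (by linarith)]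
    have f8 : ∀ s, 1/2 + (a + b + c) < s → s ≤ 1 →
        f s = -((-βj) • (Pi.single j 1 : Fin m → ℝ)) := by
      intro s h1 h2
      rw [hf, if_neg (by linarith), if_neg (by linarith), if_neg (by linarith),
        if_neg (by linarith)]
    have d1 : d = 1/2 - (a + b + c) := by linarith
    have d2 : d = 1 - (1/2 + (a + b + c)) := by linarith
  · have s0 := GohSt.init f i j
    have s1 := s0.step a _ (e) (0) (by linarith) f1 (by simp [hne, hne'])
      (by simp [hne, hne'] <;> (first | linear_combination (-1) * ae | linear_combination (1) * ae)) (by simp [hne, hne'] <;> (first | ring | ring))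
    have s2 := s1.step (a + b) _ (e) (e^2) (by linarith) f2 (by simp [hne, hne'])
      (by simp [hne, hne'] <;> (first | ring | ring)) (by simp [hne, hne'] <;> (first | linear_combination (-1) * (e) * be | linear_combination (1) * (e) * be))
    have s3 := s2.step (a + b + c) _ (0) (e^2) (by linarith) f3 (by simp [hne, hne'])
      (by simp [hne, hne'] <;> (first | linear_combination (1) * ce | linear_combination (-1) * ce)) (by simp [hne, hne'] <;> (first | ring | ring))
    rw [d1] at de
    have s4 := s3.step (1/2) _ (0) (e^2) (by linarith) f4 (by simp [hne, hne'])
      (by simp [hne, hne'] <;> (first | ring | ring)) (by simp [hne, hne'] <;> (first | linear_combination (1) * (0) * de | linear_combination (-1) * (0) * de))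
    have s5 := s4.step (1/2 + a) _ (-e) (e^2) (by linarith) f5 (by simp [hne, hne'])
      (by simp [hne, hne'] <;> (first | linear_combination (1) * ae | linear_combination (-1) * ae)) (by simp [hne, hne'] <;> (first | ring | ring))
    have s6 := s5.step (1/2 + (a + b)) _ (-e) (2 * e^2) (by linarith) f6 (by simp [hne, hne'])
      (by simp [hne, hne'] <;> (first | ring | ring)) (by simp [hne, hne'] <;> (first | linear_combination (1) * (-e) * be | linear_combination (-1) * (-e) * be))
    have s7 := s6.step (1/2 + (a + b + c)) _ (0) (2 * e^2) (by linarith) f7 (by simp [hne, hne'])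
      (by simp [hne, hne'] <;> (first | linear_combination (-1) * ce | linear_combination (1) * ce)) (by simp [hne, hne'] <;> (first | ring | ring))
    have de : (1 - (1/2 + (a + b + c))) * βj = e := by rw [← de, ← d1, ← d2]
    have s8 := s7.step 1 _ (0) (2 * e^2) (by linarith) f8 (by simp [hne, hne'])
      (by simp [hne, hne'] <;> (first | ring | ring)) (by simp [hne, hne'] <;> (first | linear_combination (-1) * (0) * de | linear_combination (1) * (0) * de))
    first | exact s8.2.2.2 | (rw [s8.2.2.2]; ring)
  · have s0 := GohSt.init f j i
    have s1 := s0.step a _ (0) (0) (by linarith) f1 (by simp [hne, hne'])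
      (by simp [hne, hne'] <;> (first | ring | ring)) (by simp [hne, hne'] <;> (first | linear_combination (-1) * (0) * ae | linear_combination (1) * (0) * ae))
    have s2 := s1.step (a + b) _ (e) (0) (by linarith) f2 (by simp [hne, hne'])
      (by simp [hne, hne'] <;> (first | linear_combination (-1) * be | linear_combination (1) * be)) (by simp [hne, hne'] <;> (first | ring | ring))
    have s3 := s2.step (a + b + c) _ (e) (-e^2) (by linarith) f3 (by simp [hne, hne'])
      (by simp [hne, hne'] <;> (first | ring | ring)) (by simp [hne, hne'] <;> (first | linear_combination (1) * (e) * ce | linear_combination (-1) * (e) * ce))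
    rw [d1] at de
    have s4 := s3.step (1/2) _ (0) (-e^2) (by linarith) f4 (by simp [hne, hne'])
      (by simp [hne, hne'] <;> (first | linear_combination (1) * de | linear_combination (-1) * de)) (by simp [hne, hne'] <;> (first | ring | ring))
    have s5 := s4.step (1/2 + a) _ (0) (-e^2) (by linarith) f5 (by simp [hne, hne'])
      (by simp [hne, hne'] <;> (first | ring | ring)) (by simp [hne, hne'] <;> (first | linear_combination (1) * (0) * ae | linear_combination (-1) * (0) * ae))
    have s6 := s5.step (1/2 + (a + b)) _ (-e) (-e^2) (by linarith) f6 (by simp [hne, hne'])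
      (by simp [hne, hne'] <;> (first | linear_combination (1) * be | linear_combination (-1) * be)) (by simp [hne, hne'] <;> (first | ring | ring))
    have s7 := s6.step (1/2 + (a + b + c)) _ (-e) (-(2 * e^2)) (by linarith) f7 (by simp [hne, hne'])
      (by simp [hne, hne'] <;> (first | ring | ring)) (by simp [hne, hne'] <;> (first | linear_combination (-1) * (-e) * ce | linear_combination (1) * (-e) * ce))
    have de : (1 - (1/2 + (a + b + c))) * βj = e := by rw [← de, ← d1, ← d2]
    have s8 := s7.step 1 _ (0) (-(2 * e^2)) (by linarith) f8 (by simp [hne, hne'])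
      (by simp [hne, hne'] <;> (first | linear_combination (-1) * de | linear_combination (1) * de)) (by simp [hne, hne'] <;> (first | ring | ring))
    first | exact s8.2.2.2 | (rw [s8.2.2.2]; ring)
end

section
/- Exponential product approximation with sublinear coefficients (Lemma 4.1). Let m ∈ ℕ, χ > 0, and let b^0, …, b^m ∈ L^1([0,T]; ℝ) satisfy |b^i(s)| ≤ χ s for a.e. s ∈ [0,T]. Let X_0, …, X_m ∈ C^1(Ω; ℝ^n) be vector fields on an open set Ω ⊆ ℝ^n, and let x(·) be a solution on [0,T] of ẋ(t) = Σ_{i=0}^m b^i(t) X_i(x(t)). Setting B^i(t) := ∫_0^t b^i(s) ds, and assuming the relevant flows and compositions are defined, one has x(t) = e^{B^0(t) X_0} ∘ ⋯ ∘ e^{B^m(t) X_m}(x(0)) + o(t³) as t → 0+. -/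
open MeasureTheory Set Filter Topology

theorem aux_flow_pos {E : Type*} [NormedAddCommGroup E] [NormedSpace ℝ E] (V : E → E) (p : E)
    (r K L : ℝ) (hL : 0 ≤ L) (hK : 0 < K)
    (hb : ∀ y ∈ Metric.closedBall p r, ‖V y‖ < K)
    (hl : ∀ y ∈ Metric.closedBall p r, ∀ z ∈ Metric.closedBall p r, ‖V y - V z‖ ≤ L * ‖y - z‖)
    (c : ℝ → E) (hc : ∀ τ, HasDerivAt c (V (c τ)) τ)
    (h0 : c 0 ∈ Metric.closedBall p (r / 2)) (τ : ℝ) (hτ : 0 ≤ τ) (hτK : K * τ ≤ r / 2) :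
    ‖c τ - c 0 - τ • V (c 0)‖ ≤ L * K * τ ^ 2 := by
  have hr : 0 ≤ r := by nlinarith [mul_nonneg hK.le hτ]
  have key : ∀ y, ‖y - c 0‖ ≤ K * τ → y ∈ Metric.closedBall p r := by
    intro y hy
    rw [mem_closedBall_iff_norm] at h0 ⊢
    calc ‖y - p‖ = ‖(y - c 0) + (c 0 - p)‖ := by congr 1; abel
      _ ≤ ‖y - c 0‖ + ‖c 0 - p‖ := norm_add_le _ _
      _ ≤ r := by linarith
  have h1 : ∀ s ∈ Icc (0:ℝ) τ, ‖c s - c 0‖ ≤ K * s := by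
    intro s hs
    refine image_norm_le_of_norm_deriv_right_lt_deriv_boundary (f := fun s => c s - c 0)
      (f' := fun s => V (c s)) (a := 0) (b := τ) (B := fun s => K * s) (B' := fun _ => K)
      ?_ ?_ ?_ ?_ ?_ hs
    · exact fun s _ => ((hc s).sub_const _).continuousAt.continuousWithinAt
    · exact fun s _ => ((hc s).sub_const _).hasDerivWithinAt
    · simp
    · intro s
      simpa using (hasDerivAt_id s).const_mul K
    · intro s hs he
      apply hb
      apply key
      rw [he]
      exact mul_le_mul_of_nonneg_left hs.2.le hK.le
  have h00 : c 0 ∈ Metric.closedBall p r := key _ (by simpa using mul_nonneg hK.le hτ)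
  have h2 := norm_image_sub_le_of_norm_deriv_le_segment' (f := fun s => c s - s • V (c 0))
      (f' := fun s => V (c s) - (1:ℝ) • V (c 0)) (a := 0) (b := τ) (C := L * (K * τ))
      (fun s _ => ((hc s).sub ((hasDerivAt_id s).smul_const (V (c 0)))).hasDerivWithinAt)
      (by
        intro s hs
        have h3 := h1 s ⟨hs.1, hs.2.le⟩
        have h4 : ‖c s - c 0‖ ≤ K * τ := h3.trans (mul_le_mul_of_nonneg_left hs.2.le hK.le)
        rw [one_smul]
        exact (hl _ (key _ h4) _ h00).trans (mul_le_mul_of_nonneg_left h4 hL))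
      τ ⟨hτ, le_rfl⟩
  calc ‖c τ - c 0 - τ • V (c 0)‖ = ‖c τ - τ • V (c 0) - (c 0 - (0:ℝ) • V (c 0))‖ := by
        congr 1; simp; abel
    _ ≤ _ := h2
    _ = _ := by ring

theorem aux_flow {E : Type*} [NormedAddCommGroup E] [NormedSpace ℝ E] (V : E → E) (p : E)
    (r K L : ℝ) (hL : 0 ≤ L) (hK : 0 < K)
    (hb : ∀ y ∈ Metric.closedBall p r, ‖V y‖ < K)
    (hl : ∀ y ∈ Metric.closedBall p r, ∀ z ∈ Metric.closedBall p r, ‖V y - V z‖ ≤ L * ‖y - z‖)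
    (c : ℝ → E) (hc : ∀ τ, HasDerivAt c (V (c τ)) τ)
    (h0 : c 0 ∈ Metric.closedBall p (r / 2)) (τ : ℝ) (hτK : K * |τ| ≤ r / 2) :
    ‖c τ - c 0 - τ • V (c 0)‖ ≤ L * K * τ ^ 2 := by
  rcases le_total 0 τ with h | h
  · rw [abs_of_nonneg h] at hτK
    exact aux_flow_pos V p r K L hL hK hb hl c hc h0 τ h hτK
  · rw [abs_of_nonpos h] at hτK
    have := aux_flow_pos (fun y => - V y) p r K L hL hK (by simpa using hb)
      (by
        intro y hy z hz
        have := hl y hy z hz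
        rwa [← norm_neg, neg_sub, ← neg_sub_neg] at this
        ) (fun s => c (-s))
      (fun s => by
        have := (hc (-s)).scomp s (hasDerivAt_neg s)
        simp only [neg_smul, one_smul] at this
        exact this) (by simpa using h0) (-τ)
      (by linarith) hτK
    simpa using this

theorem aux_lip {n : ℕ} (Ω : Set (Fin n → ℝ)) (hΩ : IsOpen Ω) (V : (Fin n → ℝ) → Fin n → ℝ)
    (hV : ContDiffOn ℝ 1 V Ω) (p : Fin n → ℝ) (hp : p ∈ Ω) :
    ∃ K L r : ℝ, 0 < K ∧ 0 ≤ L ∧ 0 < r ∧ (∀ y ∈ Metric.closedBall p r, ‖V y‖ < K) ∧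
      ∀ y ∈ Metric.closedBall p r, ∀ z ∈ Metric.closedBall p r, ‖V y - V z‖ ≤ L * ‖y - z‖ := by
  have h := hV.contDiffAt (hΩ.mem_nhds hp)
  obtain ⟨L, s, hs, hL⟩ := h.exists_lipschitzOnWith
  have h2 : ∀ᶠ y in 𝓝 p, ‖V y‖ < ‖V p‖ + 1 :=
    h.continuousAt.norm.eventually_lt_const (by linarith)
  obtain ⟨r, hr, h3⟩ := Metric.nhds_basis_closedBall.mem_iff.1 (inter_mem hs h2)
  refine ⟨‖V p‖ + 1, L, r, by positivity, L.2, hr, fun y hy => (h3 hy).2, ?_⟩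
  intro y hy z hz
  exact hL.norm_sub_le (h3 hy).1 (h3 hz).1

theorem aux_fold {n m : ℕ} (X : Fin m → (Fin n → ℝ) → Fin n → ℝ) (p : Fin n → ℝ)
    (K L r : Fin m → ℝ) (hK : ∀ i, 0 < K i) (hL : ∀ i, 0 ≤ L i) (hr : ∀ i, 0 < r i)
    (hb : ∀ i, ∀ y ∈ Metric.closedBall p (r i), ‖X i y‖ < K i)
    (hl : ∀ i, ∀ y ∈ Metric.closedBall p (r i), ∀ z ∈ Metric.closedBall p (r i),
      ‖X i y - X i z‖ ≤ L i * ‖y - z‖)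
    (Φ : Fin m → ℝ → (Fin n → ℝ) → Fin n → ℝ)
    (hΦ0 : ∀ i y, Φ i 0 y = y)
    (hΦ : ∀ i y τ, HasDerivAt (fun τ' => Φ i τ' y) (X i (Φ i τ y)) τ)
    (B : Fin m → ℝ → ℝ)
    (hB : ∀ i, B i =O[𝓝[>] 0] (fun t => t ^ 2)) (l : List (Fin m)) :
    (fun t : ℝ => ((l.map fun i => Φ i (B i t)).foldr (· ∘ ·) id) p - p
        - (l.map fun i => B i t • X i p).sum) =O[𝓝[>] 0] (fun t => t ^ 4) := by
  have t0 : Tendsto (fun t : ℝ => t) (𝓝[>] 0) (𝓝 0) := tendsto_id.mono_left nhdsWithin_le_nhds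
  have t2 : Tendsto (fun t : ℝ => t ^ 2) (𝓝[>] 0) (𝓝 0) := by simpa using t0.pow 2
  have o42 : (fun t : ℝ => t ^ 4) =O[𝓝[>] 0] (fun t : ℝ => t ^ 2) := by
    have := (t2.isBigO_one ℝ).mul (Asymptotics.isBigO_refl (fun t : ℝ => t ^ 2) (𝓝[>] 0))
    refine (this.congr ?_ ?_) <;> intro t <;> ring
  induction l with
  | nil =>
    simp only [List.map_nil, List.foldr_nil, id, sub_self, List.sum_nil]
    exact Asymptotics.isBigO_zero _ _
  | cons i l ih =>
    set g : ℝ → Fin n → ℝ := fun t => ((l.map fun i => Φ i (B i t)).foldr (· ∘ ·) id) p with hg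
    have hsum : (fun t : ℝ => (l.map fun i => B i t • X i p).sum) =O[𝓝[>] 0]
        (fun t => t ^ 2) := by
      clear ih hg g
      induction l with
      | nil =>
        simp only [List.map_nil, List.sum_nil]
        exact Asymptotics.isBigO_zero _ _
      | cons j l ih =>
        simp only [List.map_cons, List.sum_cons]
        refine Asymptotics.IsBigO.add ?_ ih
        have := (hB j).smul (Asymptotics.isBigO_refl (fun _ : ℝ => X j p) (𝓝[>] 0))
        refine this.trans ?_
        have := (Asymptotics.isBigO_refl (fun t : ℝ => t ^ 2) (𝓝[>] 0)).smul
          (Asymptotics.isBigO_const_const (X j p) (one_ne_zero (α := ℝ)) (𝓝[>] (0:ℝ)))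
        simpa using this
    have hgp : (fun t => g t - p) =O[𝓝[>] 0] (fun t => t ^ 2) := by
      refine ((ih.trans o42).add hsum).congr_left ?_
      intro t
      simp [hg]
    have hgt : Tendsto g (𝓝[>] 0) (𝓝 p) := by
      have := (hgp.trans_tendsto t2).add_const p
      simpa using this
    have hBt : Tendsto (B i) (𝓝[>] 0) (𝓝 0) := (hB i).trans_tendsto t2
    have e1 : ∀ᶠ t in 𝓝[>] (0:ℝ), g t ∈ Metric.closedBall p (r i / 2) :=
      hgt (Metric.closedBall_mem_nhds p (half_pos (hr i)))
    have e2 : ∀ᶠ t in 𝓝[>] (0:ℝ), K i * |B i t| < r i / 2 := by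
      have : Tendsto (fun t => K i * |B i t|) (𝓝[>] 0) (𝓝 0) := by
        simpa using hBt.abs.const_mul (K i)
      exact this.eventually_lt_const (half_pos (hr i))
    have hB4 : (fun t => B i t ^ 2) =O[𝓝[>] 0] (fun t => t ^ 4) := by
      refine ((hB i).pow 2).congr_right ?_
      intro t; ring
    have a1 : (fun t => Φ i (B i t) (g t) - g t - B i t • X i (g t)) =O[𝓝[>] 0]
        (fun t => t ^ 4) := by
      refine Asymptotics.IsBigO.trans (Asymptotics.IsBigO.of_bound (L i * K i) ?_) hB4
      filter_upwards [e1, e2] with t h1 h2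
      have := aux_flow (X i) p (r i) (K i) (L i) (hL i) (hK i) (hb i) (hl i)
        (fun τ => Φ i τ (g t)) (hΦ i (g t)) (by simpa only [hΦ0] using h1) (B i t) h2.le
      simp only [hΦ0] at this
      rwa [Real.norm_of_nonneg (sq_nonneg _)]
    have a2 : (fun t => B i t • (X i (g t) - X i p)) =O[𝓝[>] 0] (fun t => t ^ 4) := by
      have : (fun t => X i (g t) - X i p) =O[𝓝[>] 0] (fun t => t ^ 2) := by
        refine Asymptotics.IsBigO.trans (Asymptotics.IsBigO.of_bound (L i) ?_) hgp
        filter_upwards [e1] with t h1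
        exact hl i _ (Metric.closedBall_subset_closedBall (by linarith [hr i]) h1) _
          (Metric.mem_closedBall_self (hr i).le)
      refine ((hB i).smul this).congr_right ?_
      intro t; simp only [smul_eq_mul]; ring
    refine ((a1.add a2).add ih).congr_left ?_
    intro t
    simp only [List.map_cons, List.foldr_cons, List.sum_cons, Function.comp_apply, smul_sub]
    simp only [hg]
    abel

theorem aux_x {n m : ℕ} {T : ℝ} (hT : 0 < T) (χ : ℝ) (hχ : 0 < χ)
    (X : Fin m → (Fin n → ℝ) → Fin n → ℝ)
    (b : Fin m → ℝ → ℝ)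
    (hbI : ∀ i, IntervalIntegrable (b i) volume 0 T)
    (hb : ∀ i, ∀ᵐ s ∂(volume.restrict (Set.Icc (0:ℝ) T)), |b i s| ≤ χ * s)
    (x : ℝ → Fin n → ℝ)
    (hx : ∀ t ∈ Set.Icc (0:ℝ) T, x t = x 0 + ∫ s in (0:ℝ)..t, ∑ i, b i s • X i (x s))
    (K L r : Fin m → ℝ) (hK : ∀ i, 0 < K i) (hL : ∀ i, 0 ≤ L i) (hr : ∀ i, 0 < r i)
    (hXb : ∀ i, ∀ y ∈ Metric.closedBall (x 0) (r i), ‖X i y‖ < K i)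
    (hl : ∀ i, ∀ y ∈ Metric.closedBall (x 0) (r i), ∀ z ∈ Metric.closedBall (x 0) (r i),
      ‖X i y - X i z‖ ≤ L i * ‖y - z‖) :
    (fun t : ℝ => x t - x 0 - ∑ i, (∫ s in (0:ℝ)..t, b i s) • X i (x 0))
      =O[𝓝[>] 0] (fun t => t ^ 4) := by
  set F : ℝ → Fin n → ℝ := fun s => ∑ i, b i s • X i (x s) with hF
  have hci : ∀ t ∈ Icc (0:ℝ) T, ∀ i, IntervalIntegrable (fun s => b i s • X i (x 0)) volume 0 t := by
    intro t ht i
    have h1 : IntervalIntegrable (b i) volume 0 t := by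
      refine (hbI i).mono_set ?_
      rw [uIcc_of_le ht.1, uIcc_of_le hT.le]
      exact Icc_subset_Icc_right ht.2
    exact ⟨h1.1.smul_const _, h1.2.smul_const _⟩
  have hcs : ∀ t ∈ Icc (0:ℝ) T, IntervalIntegrable (fun s => ∑ i, b i s • X i (x 0)) volume 0 t := by
    intro t ht
    have := IntervalIntegrable.sum Finset.univ (fun i _ => hci t ht i)
    have e : (fun s => ∑ i, b i s • X i (x 0)) = ∑ i, fun s => b i s • X i (x 0) := by
      funext s; simp
    rw [e]; exact this
  have hδ : ∃ δ, 0 < δ ∧ δ ≤ T ∧ IntervalIntegrable F volume 0 δ := by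
    by_contra! h
    have hxc : ∀ t ∈ Icc (0:ℝ) T, x t = x 0 := by
      intro t ht
      rcases ht.1.eq_or_lt with h0 | h0
      · rw [← h0]
      · rw [hx t ht, intervalIntegral.integral_undef (h t h0 ht.2), add_zero]
    refine h T hT le_rfl ((hcs T ⟨hT.le, le_rfl⟩).congr ?_)
    intro s hs
    rw [uIoc_of_le hT.le] at hs
    simp only [hF]
    rw [hxc s ⟨hs.1.le, hs.2⟩]
  obtain ⟨δ, hδ0, hδT, hFi⟩ := hδ
  have hxt : Tendsto x (𝓝[>] 0) (𝓝 (x 0)) := by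
    have h1 : ContinuousOn (fun t => ∫ s in (0:ℝ)..t, F s) (Icc 0 δ) := by
      have := intervalIntegral.continuousOn_primitive_interval (μ := volume) (f := F)
        (a := 0) (b := δ) (by rw [uIcc_of_le hδ0.le]; exact (intervalIntegrable_iff_integrableOn_Icc_of_le hδ0.le).1 hFi)
      rwa [uIcc_of_le hδ0.le] at this
    have h2 := (h1 0 ⟨le_rfl, hδ0.le⟩).tendsto
    simp only [intervalIntegral.integral_same] at h2
    have h3 : Tendsto (fun t => x 0 + ∫ s in (0:ℝ)..t, F s) (𝓝[>] 0) (𝓝 (x 0)) := by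
      have h4 : 𝓝[>] (0:ℝ) ≤ 𝓝[Icc 0 δ] 0 := by
        rw [← nhdsWithin_Ioc_eq_nhdsGT hδ0]
        exact nhdsWithin_mono _ Ioc_subset_Icc_self
      simpa using (h2.mono_left h4).const_add (x 0)
    refine h3.congr' ?_
    filter_upwards [Ioc_mem_nhdsGT hT] with t ht
    exact (hx t ⟨ht.1.le, ht.2⟩).symm
  have hev : ∀ᶠ t in 𝓝[>] (0:ℝ), ∀ i, x t ∈ Metric.closedBall (x 0) (r i) :=
    eventually_all.2 fun i => hxt (Metric.closedBall_mem_nhds _ (hr i))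
  obtain ⟨ε, hε, hball⟩ := mem_nhdsGT_iff_exists_Ioc_subset.1 hev
  have hε : (0:ℝ) < ε := hε
  set ρ := min ε δ with hρ
  have hρ0 : 0 < ρ := lt_min hε hδ0
  have hbt : ∀ t ∈ Ioc (0:ℝ) ρ, ∀ᵐ s, s ∈ uIoc 0 t → ∀ i, |b i s| ≤ χ * t := by
    intro t ht
    have : ∀ᵐ s, ∀ i, s ∈ Icc (0:ℝ) T → |b i s| ≤ χ * s :=
      ae_all_iff.2 fun i => (ae_restrict_iff' measurableSet_Icc).1 (hb i)
    filter_upwards [this] with s hs hst i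
    rw [uIoc_of_le ht.1.le] at hst
    refine (hs i ⟨hst.1.le, hst.2.trans (ht.2.trans ((min_le_right _ _).trans hδT))⟩).trans ?_
    exact mul_le_mul_of_nonneg_left hst.2 hχ.le
  have htT : ∀ t ∈ Ioc (0:ℝ) ρ, t ∈ Icc (0:ℝ) T := fun t ht =>
    ⟨ht.1.le, ht.2.trans ((min_le_right _ _).trans hδT)⟩
  have hxball : ∀ t ∈ Ioc (0:ℝ) ρ, ∀ i, x t ∈ Metric.closedBall (x 0) (r i) := fun t ht =>
    hball ⟨ht.1, ht.2.trans (min_le_left _ _)⟩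
  set C := ∑ i, χ * K i with hC
  have hx2 : ∀ t ∈ Ioc (0:ℝ) ρ, ‖x t - x 0‖ ≤ C * t ^ 2 := by
    intro t ht
    rw [hx t (htT t ht), add_sub_cancel_left]
    have := intervalIntegral.norm_integral_le_of_norm_le_const_ae (a := 0) (b := t) (f := F)
      (C := C * t) (by
        filter_upwards [hbt t ht] with s hs hst
        have hs := hs hst
        rw [uIoc_of_le ht.1.le] at hst
        rw [hC, Finset.sum_mul]
        refine (norm_sum_le _ _).trans (Finset.sum_le_sum fun i _ => ?_)
        rw [norm_smul, Real.norm_eq_abs]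
        have h1 := (hXb i _ (hxball s ⟨hst.1, hst.2.trans ht.2⟩ i)).le
        calc |b i s| * ‖X i (x s)‖ ≤ (χ * t) * K i :=
              mul_le_mul (hs i) h1 (norm_nonneg _) (mul_nonneg hχ.le ht.1.le)
          _ = _ := by ring)
    refine this.trans (le_of_eq ?_)
    rw [sub_zero, abs_of_pos ht.1]; ring
  have hC0 : 0 ≤ C := Finset.sum_nonneg fun i _ => mul_nonneg hχ.le (hK i).le
  refine Asymptotics.IsBigO.of_bound (∑ i, χ * L i * C) ?_
  filter_upwards [Ioc_mem_nhdsGT hρ0] with t ht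
  have hFt : IntervalIntegrable F volume 0 t := by
    refine hFi.mono_set ?_
    rw [uIcc_of_le ht.1.le, uIcc_of_le hδ0.le]
    exact Icc_subset_Icc_right (ht.2.trans (min_le_right _ _))
  have heq : x t - x 0 - ∑ i, (∫ s in (0:ℝ)..t, b i s) • X i (x 0)
      = ∫ s in (0:ℝ)..t, (F s - ∑ i, b i s • X i (x 0)) := by
    rw [intervalIntegral.integral_sub hFt (hcs t (htT t ht)),
      intervalIntegral.integral_finset_sum (fun i _ => hci t (htT t ht) i)]
    conv_lhs => rw [hx t (htT t ht), add_sub_cancel_left]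
    congr 1
    refine Finset.sum_congr rfl fun i _ => ?_
    rw [intervalIntegral.integral_smul_const]
  rw [heq]
  have := intervalIntegral.norm_integral_le_of_norm_le_const_ae (a := 0) (b := t)
      (f := fun s => F s - ∑ i, b i s • X i (x 0))
      (C := (∑ i, χ * L i * C) * t ^ 3) (by
        filter_upwards [hbt t ht] with s hs hst
        have hs := hs hst
        rw [uIoc_of_le ht.1.le] at hst
        have hsρ : s ∈ Ioc (0:ℝ) ρ := ⟨hst.1, hst.2.trans ht.2⟩
        simp only [hF]
        rw [← Finset.sum_sub_distrib, Finset.sum_mul]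
        refine (norm_sum_le _ _).trans (Finset.sum_le_sum fun i _ => ?_)
        rw [← smul_sub, norm_smul, Real.norm_eq_abs]
        have h1 := hl i _ (hxball s hsρ i) _ (Metric.mem_closedBall_self (hr i).le)
        have h2 : ‖x s - x 0‖ ≤ C * t ^ 2 := (hx2 s hsρ).trans
          (mul_le_mul_of_nonneg_left (pow_le_pow_left₀ hst.1.le hst.2 2) hC0)
        have h3 := h1.trans (mul_le_mul_of_nonneg_left h2 (hL i))
        calc |b i s| * ‖X i (x s) - X i (x 0)‖ ≤ (χ * t) * (L i * (C * t ^ 2)) :=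
              mul_le_mul (hs i) h3 (norm_nonneg _) (mul_nonneg hχ.le ht.1.le)
          _ = _ := by ring)
  refine this.trans (le_of_eq ?_)
  rw [sub_zero, abs_of_pos ht.1, Real.norm_of_nonneg (by positivity)]; ring

theorem aux_B {T : ℝ} (hT : 0 < T) (χ : ℝ) (hχ : 0 < χ) (b : ℝ → ℝ)
    (hb : ∀ᵐ s ∂(volume.restrict (Set.Icc (0:ℝ) T)), |b s| ≤ χ * s) :
    (fun t => ∫ s in (0:ℝ)..t, b s) =O[𝓝[>] 0] (fun t => t ^ 2) := by
  refine Asymptotics.IsBigO.of_bound χ ?_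
  filter_upwards [Ioc_mem_nhdsGT hT] with t ht
  have := intervalIntegral.norm_integral_le_of_norm_le_const_ae (a := 0) (b := t)
      (f := b) (C := χ * t) (by
        filter_upwards [(ae_restrict_iff' measurableSet_Icc).1 hb] with s hs hst
        rw [uIoc_of_le ht.1.le] at hst
        exact (hs ⟨hst.1.le, hst.2.trans ht.2⟩).trans (mul_le_mul_of_nonneg_left hst.2 hχ.le))
  refine this.trans (le_of_eq ?_)
  rw [sub_zero, abs_of_pos ht.1, Real.norm_of_nonneg (by positivity)]; ring

/-- **Exponential product approximation with sublinear coefficients** (Lemma 4.1).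
The flows `e^{τ Xᵢ}` are encoded by maps `Φ i` satisfying the flow ODE; the composition
`e^{B⁰(t)X₀} ∘ ⋯ ∘ e^{Bᵐ(t)Xₘ}` is the fold of the list of flow maps. -/
theorem exp_product_sublinear
    {n M : ℕ} {T : ℝ} (hT : 0 < T) (χ : ℝ) (hχ : 0 < χ)
    (Ω : Set (Fin n → ℝ)) (hΩ : IsOpen Ω)
    (X : Fin (M + 1) → (Fin n → ℝ) → Fin n → ℝ)
    (hX : ∀ i, ContDiffOn ℝ 1 (X i) Ω)
    (b : Fin (M + 1) → ℝ → ℝ)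
    (hbI : ∀ i, IntervalIntegrable (b i) volume 0 T)
    (hb : ∀ i, ∀ᵐ s ∂(volume.restrict (Set.Icc (0:ℝ) T)), |b i s| ≤ χ * s)
    (x : ℝ → Fin n → ℝ)
    (hx : ∀ t ∈ Set.Icc (0:ℝ) T, x t = x 0 + ∫ s in (0:ℝ)..t, ∑ i, b i s • X i (x s))
    (hxΩ : ∀ t ∈ Set.Icc (0:ℝ) T, x t ∈ Ω)
    -- the flows `Φ i τ = e^{τ Xᵢ}`, assumed to be (globally) defined
    (Φ : Fin (M + 1) → ℝ → (Fin n → ℝ) → Fin n → ℝ)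
    (hΦ0 : ∀ i y, Φ i 0 y = y)
    (hΦ : ∀ i y τ, HasDerivAt (fun τ' => Φ i τ' y) (X i (Φ i τ y)) τ) :
    (fun t : ℝ => x t -
        ((List.ofFn fun i : Fin (M + 1) => Φ i (∫ s in (0:ℝ)..t, b i s)).foldr
          (· ∘ ·) id) (x 0))
      =o[nhdsWithin 0 (Set.Ioi 0)] (fun t => t ^ 3) := by
  have hp : x 0 ∈ Ω := hxΩ 0 ⟨le_rfl, hT.le⟩
  choose K L r hK hL hr hXb hl using fun i => aux_lip Ω hΩ (X i) (hX i) (x 0) hp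
  have h1 := aux_x hT χ hχ X b hbI hb x hx K L r hK hL hr hXb hl
  have h2 := aux_fold X (x 0) K L r hK hL hr hXb hl Φ hΦ0 hΦ
    (fun i t => ∫ s in (0:ℝ)..t, b i s) (fun i => aux_B hT χ hχ (b i) (hb i))
    (List.finRange (M + 1))
  have h3 : (fun t : ℝ => t ^ 4) =o[𝓝[>] 0] (fun t : ℝ => t ^ 3) :=
    (Asymptotics.isLittleO_pow_pow (by norm_num)).mono nhdsWithin_le_nhds
  refine ((h1.sub h2).congr_left ?_).trans_isLittleO h3
  intro t
  simp only [← List.ofFn_eq_map, List.sum_ofFn]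
  abel
end

section
/- Second-order exponential product expansion (Proposition 4.3). For i = 0, …, m let a^i ∈ L^∞([0,T]; ℝ) and let g_i ∈ C^2(Ω; ℝ^n) be vector fields on an open set Ω ⊆ ℝ^n. Set A^i(s) := ∫_0^s a^i(σ) dσ and, for i < j, A^{i,j}(s) := ∫_0^s A^i(σ) a^j(σ) dσ. Then every solution x(·) (on some interval [0,τ]) of ẋ(t) = Σ_{i=0}^m a^i(t) g_i(x(t)) satisfies, assuming the relevant flows are defined, x(t) = e^{A^0(t) g_0} ∘ ⋯ ∘ e^{A^m(t) g_m} ∘ e^{A^{0,1}(t) [g_0,g_1]} ∘ ⋯ ∘ e^{A^{m−1,m}(t) [g_{m−1},g_m]}(x(0)) + o(t²) as t → 0+, where the product over the bracket factors is taken in lexicographic order of the pairs (i,j) with i < j. -/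
open MeasureTheory Set Filter Topology

/-- Lie bracket of two vector fields on `ℝⁿ`. -/
noncomputable def lieBracket {n : ℕ} (X Y : (Fin n → ℝ) → (Fin n → ℝ)) (x : Fin n → ℝ) :
    Fin n → ℝ :=
  fderiv ℝ Y x (X x) - fderiv ℝ X x (Y x)

/-- The list of all pairs `(i,j)` with `i < j`, in lexicographic order. -/
def lexPairs (M : ℕ) : List (Fin (M + 1) × Fin (M + 1)) :=
  (List.finRange (M + 1)).foldr
    (fun i acc =>
      (((List.finRange (M + 1)).filter (fun j => decide (i < j))).map (fun j => (i, j))) ++ acc)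
    []

open Asymptotics

section aux
variable {E : Type*} [NormedAddCommGroup E] [NormedSpace ℝ E]

theorem aux_flow0_pos {f : E → E} {x0 : E} (hf : ContinuousAt f x0) {ε : ℝ} (hε : 0 < ε) :
    ∃ η > 0, ∀ c : ℝ → E, (∀ s, HasDerivAt c (f (c s)) s) → ‖c 0 - x0‖ < η →
      ∀ s, 0 ≤ s → s < η → ‖c s - c 0 - s • f x0‖ ≤ ε * s := by
  obtain ⟨δ, hδ, hδf⟩ := Metric.continuousAt_iff.1 hf ε hε
  set L := ‖f x0‖ + ε + 1 with hL
  have hLp : 0 < L := by positivity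
  refine ⟨min (δ / 2) (δ / (2 * L)), by positivity, ?_⟩
  intro c hc h0 s hs0 hs
  have hη1 : ‖c 0 - x0‖ < δ / 2 := lt_of_lt_of_le h0 (min_le_left _ _)
  have hη2 : s < δ / (2 * L) := lt_of_lt_of_le hs (min_le_right _ _)
  have hη3 : s * L < δ / 2 := by
    rw [lt_div_iff₀ (by positivity)] at hη2 ⊢
    linarith
  have hd : ∀ σ, HasDerivAt (fun s => c s - c 0 - s • f x0) (f (c σ) - f x0) σ := by
    intro σ
    have := ((hc σ).sub_const (c 0)).fun_sub ((hasDerivAt_id σ).smul_const (f x0))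
    simpa using this
  refine image_norm_le_of_norm_deriv_right_lt_deriv_boundary
    (f := fun s => c s - c 0 - s • f x0) (f' := fun σ => f (c σ) - f x0)
    (a := 0) (b := s) (B := fun s => ε * s) (B' := fun _ => ε)
    (fun σ _ => (hd σ).continuousAt.continuousWithinAt)
    (fun σ _ => (hd σ).hasDerivWithinAt) (by simp)
    (fun σ => by simpa using (hasDerivAt_id σ).const_mul ε) ?_ (right_mem_Icc.2 hs0)
  intro σ hσ he
  have h1 : dist (c σ) x0 < δ := by
    rw [dist_eq_norm]
    have e : c σ - x0 = (c σ - c 0 - σ • f x0) + (c 0 - x0) + σ • f x0 := by abel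
    have : ‖c σ - x0‖ ≤ ε * σ + ‖c 0 - x0‖ + σ * ‖f x0‖ := by
      rw [e]
      refine (norm_add₃_le).trans ?_
      rw [he, norm_smul, Real.norm_of_nonneg hσ.1]
    have h2 : σ * L ≤ s * L := by have := hσ.2.le; gcongr
    have h3 : ε * σ + σ * ‖f x0‖ ≤ σ * L := by rw [hL]; nlinarith [hσ.1]
    linarith
  have := hδf h1
  rwa [dist_eq_norm] at this

theorem aux_flow0 {f : E → E} {x0 : E} (hf : ContinuousAt f x0) {ε : ℝ} (hε : 0 < ε) :
    ∃ η > 0, ∀ c : ℝ → E, (∀ s, HasDerivAt c (f (c s)) s) → ‖c 0 - x0‖ < η →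
      ∀ s, |s| < η → ‖c s - c 0 - s • f x0‖ ≤ ε * |s| := by
  obtain ⟨η1, h1, H1⟩ := aux_flow0_pos hf hε
  obtain ⟨η2, h2, H2⟩ := aux_flow0_pos hf.neg hε
  refine ⟨min η1 η2, lt_min h1 h2, ?_⟩
  intro c hc h0 s hs
  rcases le_total 0 s with h | h
  · rw [abs_of_nonneg h] at hs ⊢
    exact H1 c hc (h0.trans_le (min_le_left _ _)) s h (hs.trans_le (min_le_left _ _))
  · rw [abs_of_nonpos h] at hs ⊢
    have := H2 (fun s => c (-s)) (fun σ => by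
      have : HasDerivAt (fun s => c (-s)) _ σ := HasDerivAt.scomp σ (hc (-σ)) (hasDerivAt_neg σ)
      simpa using this) (by simpa using h0.trans_le (min_le_right _ _)) (-s) (by linarith)
      (hs.trans_le (min_le_right _ _))
    simpa using this

theorem aux_flow1 {f : E → E} {x0 : E} {D : E →L[ℝ] E} (hf : HasFDerivAt f D x0)
    {ε : ℝ} (hε : 0 < ε) :
    ∃ η > 0, ∀ c : ℝ → E, (∀ s, HasDerivAt c (f (c s)) s) → ‖c 0 - x0‖ < η →
      ∀ s, |s| < η → ‖c s - c 0 - s • f x0 - s • D (c 0 - x0) - (s ^ 2 / 2) • D (f x0)‖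
        ≤ ε * (‖c 0 - x0‖ + |s|) * |s| := by
  set L := ‖f x0‖ + 1 with hL
  have hLp : 1 ≤ L := by have := norm_nonneg (f x0); linarith
  set ε1 := ε / (2 * L) with hε1
  have hε1p : 0 < ε1 := by positivity
  set ε2 := min 1 (ε / (2 * (‖D‖ + 1))) with hε2
  have hε2p : 0 < ε2 := by positivity
  obtain ⟨η0, hη0, H0⟩ := aux_flow0 hf.continuousAt hε2p
  have hb := (hasFDerivAt_iff_isLittleO.1 hf).bound hε1p
  obtain ⟨δ, hδ, Hδ⟩ := Metric.eventually_nhds_iff.1 hb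
  refine ⟨min η0 (δ / (2 * L)), by positivity, ?_⟩
  intro c hc h0 s hs
  have hsδ : |s| < δ / (2 * L) := hs.trans_le (min_le_right _ _)
  have h0δ : ‖c 0 - x0‖ < δ / (2 * L) := h0.trans_le (min_le_right _ _)
  have hδL : δ / (2 * L) * L = δ / 2 := by field_simp
  have hd : ∀ σ, HasDerivAt (fun s => c s - c 0 - s • f x0 - s • D (c 0 - x0) -
      (s ^ 2 / 2) • D (f x0)) (f (c σ) - f x0 - D (c 0 - x0) - σ • D (f x0)) σ := by
    intro σ
    have h2 : HasDerivAt (fun s : ℝ => s ^ 2 / 2) σ σ := by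
      have := (hasDerivAt_pow 2 σ).div_const 2
      simpa using this
    have := ((((hc σ).sub_const (c 0)).fun_sub ((hasDerivAt_id σ).smul_const (f x0))).fun_sub
      ((hasDerivAt_id σ).smul_const (D (c 0 - x0)))).fun_sub (h2.smul_const (D (f x0)))
    simpa using this
  have key := Convex.norm_image_sub_le_of_norm_hasDerivWithin_le (s := uIcc 0 s)
    (x := 0) (y := s) (C := ε * (‖c 0 - x0‖ + |s|)) (fun σ _ => (hd σ).hasDerivWithinAt) ?_
    (convex_uIcc _ _) left_mem_uIcc right_mem_uIcc
  · simpa using key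
  intro σ hσ
  have hσs : |σ| ≤ |s| := by simpa using abs_sub_left_of_mem_uIcc hσ
  have b0 := H0 c hc (h0.trans_le (min_le_left _ _)) σ (hσs.trans_lt (hs.trans_le (min_le_left _ _)))
  have b1 : ‖c σ - x0‖ ≤ L * (‖c 0 - x0‖ + |s|) := by
    have e : c σ - x0 = (c σ - c 0 - σ • f x0) + (c 0 - x0) + σ • f x0 := by abel
    rw [e]
    refine (norm_add₃_le).trans ?_
    rw [norm_smul, Real.norm_eq_abs]
    have : ε2 * |σ| ≤ 1 * |σ| := by gcongr; exact min_le_left _ _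
    have h3 : |σ| * L ≤ |s| * L := by gcongr
    have h4 : 1 * ‖c 0 - x0‖ ≤ L * ‖c 0 - x0‖ := by gcongr
    have h5 : |σ| * L = |σ| * ‖f x0‖ + |σ| := by rw [hL]; ring
    linarith
  have b2 := Hδ (y := c σ) (by
    rw [dist_eq_norm]
    nlinarith)
  have e : f (c σ) - f x0 - D (c 0 - x0) - σ • D (f x0) =
      (f (c σ) - f x0 - D (c σ - x0)) + D (c σ - c 0 - σ • f x0) := by
    simp only [map_sub, map_smul]; abel
  rw [e]
  refine (norm_add_le _ _).trans ?_
  have b3 : ‖D (c σ - c 0 - σ • f x0)‖ ≤ ε / 2 * |s| := by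
    refine (D.le_opNorm _).trans ?_
    calc ‖D‖ * ‖c σ - c 0 - σ • f x0‖ ≤ (‖D‖ + 1) * (ε / (2 * (‖D‖ + 1)) * |s|) := by
          gcongr
          · linarith
          · refine b0.trans ?_
            gcongr
            exact min_le_right _ _
      _ = ε / 2 * |s| := by field_simp
  have b4 : ε1 * ‖c σ - x0‖ ≤ ε / 2 * (‖c 0 - x0‖ + |s|) := by
    calc ε1 * ‖c σ - x0‖ ≤ ε1 * (L * (‖c 0 - x0‖ + |s|)) := by gcongr
      _ = _ := by rw [hε1]; field_simp
  have : 0 ≤ ε / 2 * ‖c 0 - x0‖ := by positivity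
  linarith

theorem aux_L0 {f : E → E} {x0 : E} (hf : ContinuousAt f x0) {φ : ℝ → E → E}
    (h0 : ∀ y, φ 0 y = y) (hφ : ∀ y s, HasDerivAt (fun s => φ s y) (f (φ s y)) s)
    {τ : ℝ → ℝ} {y : ℝ → E} {l : Filter ℝ} (hl : Tendsto (fun t : ℝ => t) l (𝓝 0))
    (hτ : τ =O[l] fun t => t ^ 2) (hy : Tendsto y l (𝓝 x0)) :
    (fun t => φ (τ t) (y t) - y t - τ t • f x0) =o[l] fun t => t ^ 2 := by
  have hτ0 : Tendsto τ l (𝓝 0) := hτ.trans_tendsto (by simpa using hl.pow 2)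
  refine IsLittleO.trans_isBigO ?_ hτ
  rw [isLittleO_iff]
  intro ε hε
  obtain ⟨η, hη, H⟩ := aux_flow0 hf hε
  have e1 := Metric.tendsto_nhds.1 hτ0 η hη
  have e2 := Metric.tendsto_nhds.1 hy η hη
  filter_upwards [e1, e2] with t h1 h2
  have := H (fun s => φ s (y t)) (hφ (y t)) (by rwa [h0, ← dist_eq_norm]) (τ t) (by simpa using h1)
  simpa [h0] using this

theorem aux_L1 {f : E → E} {x0 : E} {D : E →L[ℝ] E} (hf : HasFDerivAt f D x0) {φ : ℝ → E → E}
    (h0 : ∀ y, φ 0 y = y) (hφ : ∀ y s, HasDerivAt (fun s => φ s y) (f (φ s y)) s)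
    {τ : ℝ → ℝ} {y : ℝ → E} {l : Filter ℝ} (hl : Tendsto (fun t : ℝ => t) l (𝓝 0))
    (hτ : τ =O[l] fun t => t) (hy : (fun t => y t - x0) =O[l] fun t => t) :
    (fun t => φ (τ t) (y t) - y t - τ t • f x0 - τ t • D (y t - x0) - (τ t ^ 2 / 2) • D (f x0))
      =o[l] fun t => t ^ 2 := by
  have hτ0 : Tendsto τ l (𝓝 0) := hτ.trans_tendsto hl
  have hy0 : Tendsto (fun t => y t - x0) l (𝓝 0) := hy.trans_tendsto hl
  have hO : (fun t => (‖y t - x0‖ + |τ t|) * |τ t|) =O[l] fun t => t ^ 2 := by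
    simpa [sq] using (hy.norm_left.add hτ.norm_left).mul hτ.norm_left
  refine IsLittleO.trans_isBigO ?_ hO
  rw [isLittleO_iff]
  intro ε hε
  obtain ⟨η, hη, H⟩ := aux_flow1 hf hε
  have e1 := Metric.tendsto_nhds.1 hτ0 η hη
  have e2 := Metric.tendsto_nhds.1 hy0 η hη
  filter_upwards [e1, e2] with t h1 h2
  have := H (fun s => φ s (y t)) (hφ (y t)) (by rw [h0]; simpa using h2) (τ t) (by simpa using h1)
  rw [Real.norm_of_nonneg (by positivity), ← mul_assoc]
  simpa [h0] using this

theorem aux_listB {ι : Type*} (L : List ι) {f : ι → E → E} {x0 : E} {φ : ι → ℝ → E → E}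
    {τ : ι → ℝ → ℝ} {l : Filter ℝ} (hl : Tendsto (fun t : ℝ => t) l (𝓝 0))
    (hf : ∀ i ∈ L, ContinuousAt (f i) x0)
    (h0 : ∀ i ∈ L, ∀ y, φ i 0 y = y)
    (hφ : ∀ i ∈ L, ∀ y s, HasDerivAt (fun s => φ i s y) (f i (φ i s y)) s)
    (hτ : ∀ i ∈ L, τ i =O[l] fun t => t ^ 2) :
    (fun t => (L.map (fun i => φ i (τ i t))).foldr (· ∘ ·) id x0 - x0 -
        (L.map (fun i => τ i t • f i x0)).sum) =o[l] (fun t => t ^ 2) ∧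
      (fun t => (L.map (fun i => τ i t • f i x0)).sum) =O[l] (fun t => t ^ 2) := by
  induction L with
  | nil => simp [isBigO_zero]
  | cons i L ih =>
    obtain ⟨ih1, ih2⟩ := ih (fun j hj => hf j (by simp [hj])) (fun j hj => h0 j (by simp [hj]))
      (fun j hj => hφ j (by simp [hj])) (fun j hj => hτ j (by simp [hj]))
    have hi : τ i =O[l] fun t => t ^ 2 := hτ i (by simp)
    have hsq : Tendsto (fun t : ℝ => t ^ 2) l (𝓝 0) := by simpa using hl.pow 2
    constructor
    · have hy : Tendsto (fun t => (L.map (fun i => φ i (τ i t))).foldr (· ∘ ·) id x0) l (𝓝 x0) := by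
        have := (ih1.isBigO.add ih2).trans_tendsto hsq
        have := this.add_const x0
        simpa using this
      have := (aux_L0 (hf i (by simp)) (h0 i (by simp)) (hφ i (by simp)) hl hi hy).add ih1
      refine this.congr_left fun t => ?_
      simp only [List.map_cons, List.foldr_cons, List.sum_cons, Function.comp_apply]
      abel
    · simp only [List.map_cons, List.sum_cons]
      refine IsBigO.add ?_ ih2
      simpa using hi.smul (isBigO_const_const (f i x0) (one_ne_zero (α := ℝ)) l)

theorem aux_listA {x0 : E} {l : Filter ℝ} (hl : Tendsto (fun t : ℝ => t) l (𝓝 0))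
    {y : ℝ → E} {b : ℝ → E} (hb : b =O[l] fun t => t ^ 2)
    (hy : (fun t => y t - x0 - b t) =o[l] fun t => t ^ 2) (k : ℕ) :
    ∀ {f : Fin k → E → E} {D : Fin k → E →L[ℝ] E} {φ : Fin k → ℝ → E → E} {τ : Fin k → ℝ → ℝ}
    (_ : ∀ i, HasFDerivAt (f i) (D i) x0)
    (_ : ∀ i y, φ i 0 y = y)
    (_ : ∀ i y s, HasDerivAt (fun s => φ i s y) (f i (φ i s y)) s)
    (_ : ∀ i, τ i =O[l] fun t => t),
    (fun t => (List.ofFn (fun i => φ i (τ i t))).foldr (· ∘ ·) id (y t) - x0 -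
        (b t + ∑ i, τ i t • f i x0 + ∑ i, (τ i t ^ 2 / 2) • D i (f i x0) +
          ∑ i, ∑ j, if i < j then (τ i t * τ j t) • D i (f j x0) else 0)) =o[l] (fun t => t ^ 2) := by
  have hsq : (fun t : ℝ => t ^ 2) =o[l] fun t => t := by
    have : (fun t : ℝ => t) =o[l] fun _ => (1:ℝ) := (isLittleO_one_iff ℝ).2 hl
    simpa [sq] using this.mul_isBigO (isBigO_refl (fun t : ℝ => t) l)
  induction k with
  | zero =>
    intro f D φ τ _ _ _ _
    simpa using hy
  | succ k ih =>
    intro f D φ τ hf h0 hφ hτ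
    have IH := ih (f := fun i => f i.succ) (D := fun i => D i.succ) (φ := fun i => φ i.succ)
      (τ := fun i => τ i.succ) (fun i => hf _) (fun i => h0 _) (fun i => hφ _) (fun i => hτ _)
    set z : ℝ → E := fun t => (List.ofFn (fun i : Fin k => φ i.succ (τ i.succ t))).foldr
      (· ∘ ·) id (y t) with hz
    set S : ℝ → E := fun t => ∑ i : Fin k, τ i.succ t • f i.succ x0 with hS
    have hSO : S =O[l] fun t => t := by
      refine IsBigO.fun_sum fun i _ => ?_
      simpa using (hτ i.succ).smul (isBigO_const_const (f i.succ x0) (one_ne_zero (α := ℝ)) l)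
    have hQ : (fun t => ∑ i : Fin k, (τ i.succ t ^ 2 / 2) • D i.succ (f i.succ x0))
        =O[l] fun t => t ^ 2 := by
      refine IsBigO.fun_sum fun i _ => ?_
      have := ((hτ i.succ).pow 2).const_mul_left (1/2)
      have := this.smul (isBigO_const_const (D i.succ (f i.succ x0)) (one_ne_zero (α := ℝ)) l)
      refine this.congr (fun t => ?_) (fun t => by simp)
      congr 1; ring
    have hR : (fun t => ∑ i : Fin k, ∑ j : Fin k, if i < j then
        (τ i.succ t * τ j.succ t) • D i.succ (f j.succ x0) else 0) =O[l] fun t => t ^ 2 := by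
      refine IsBigO.fun_sum fun i _ => IsBigO.fun_sum fun j _ => ?_
      split_ifs
      · have := ((hτ i.succ).mul (hτ j.succ)).smul
          (isBigO_const_const (D i.succ (f j.succ x0)) (one_ne_zero (α := ℝ)) l)
        simpa [sq] using this
      · exact isBigO_zero _ _
    have hzS : (fun t => z t - x0 - S t) =O[l] fun t => t ^ 2 := by
      refine (((IH.isBigO.add hb).add hQ).add hR).congr_left fun t => ?_
      simp only [hz, hS]
      abel
    have hzO : (fun t => z t - x0) =O[l] fun t => t := by
      refine ((hzS.trans hsq.isBigO).add hSO).congr_left fun t => ?_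
      abel
    have step := aux_L1 (hf 0) (h0 0) (hφ 0) hl (hτ 0) hzO
    have hD : (fun t => τ 0 t • D 0 (z t - x0 - S t)) =o[l] fun t => t ^ 2 := by
      have h1 : (fun t => D 0 (z t - x0 - S t)) =o[l] fun t => t :=
        (((D 0).isBigO_comp _ l).trans hzS).trans_isLittleO hsq
      simpa [sq] using (hτ 0).smul_isLittleO h1
    refine ((step.add hD).add IH).congr_left fun t => ?_
    have e1 : ∀ t, (List.ofFn (fun i => φ i (τ i t))).foldr (· ∘ ·) id (y t) = φ 0 (τ 0 t) (z t) := by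
      intro t
      simp [List.ofFn_succ, hz]
    rw [e1]
    simp only [Fin.sum_univ_succ, Fin.succ_lt_succ_iff, Fin.succ_pos, if_true,
      if_false, Fin.not_lt_zero, zero_add, map_sub, smul_sub, hS, map_sum, map_smul, Finset.smul_sum,
      smul_smul]
    simp only [hz]
    abel

end aux

section aux2
variable {E : Type*} [NormedAddCommGroup E] [NormedSpace ℝ E]

theorem aux_int_bound {T : ℝ} (hT : 0 < T) {a : ℝ → ℝ} {K : ℝ}
    (haB : ∀ᵐ s ∂(volume.restrict (Set.Icc (0:ℝ) T)), |a s| ≤ K) {h : ℝ → E} {k : ℕ} {C : ℝ}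
    (hC : 0 ≤ C) (hh : ∀ᶠ s in 𝓝[>] (0:ℝ), ‖h s‖ ≤ C * ‖s ^ k‖) :
    ∀ᶠ t in 𝓝[>] (0:ℝ), ‖∫ s in (0:ℝ)..t, a s • h s‖ ≤ (|K| * C) * ‖t ^ (k + 1)‖ := by
  obtain ⟨δ, hδ, H⟩ := mem_nhdsGT_iff_exists_Ioo_subset.1 hh
  have hδ' : (0:ℝ) < δ := hδ
  rw [ae_restrict_iff' measurableSet_Icc] at haB
  have : Ioo (0:ℝ) (min δ T) ∈ 𝓝[>] (0:ℝ) := Ioo_mem_nhdsGT (lt_min hδ' hT)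
  filter_upwards [this] with t ht
  have ht0 : 0 < t := ht.1
  have key := intervalIntegral.norm_integral_le_of_norm_le_const_ae (a := 0) (b := t)
    (C := |K| * (C * t ^ k)) (f := fun s => a s • h s) ?_
  · rw [sub_zero, abs_of_pos ht0] at key
    rw [Real.norm_of_nonneg (by positivity)]
    refine key.trans_eq ?_
    ring
  · filter_upwards [haB] with s hs hst
    rw [uIoc_of_le ht0.le] at hst
    have h1 : |a s| ≤ K := hs ⟨hst.1.le, hst.2.trans (ht.2.le.trans (min_le_right _ _))⟩
    have h2 : ‖h s‖ ≤ C * ‖s ^ k‖ :=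
      H ⟨hst.1, hst.2.trans_lt (ht.2.trans_le (min_le_left _ _))⟩
    rw [norm_smul, Real.norm_eq_abs]
    have h3 : |a s| ≤ |K| := h1.trans (le_abs_self K)
    have h4 : ‖s ^ k‖ ≤ t ^ k := by
      rw [Real.norm_of_nonneg (by have := hst.1.le; positivity)]
      exact pow_le_pow_left₀ hst.1.le hst.2 k
    have h5 : ‖h s‖ ≤ C * t ^ k := h2.trans (by gcongr)
    gcongr

theorem aux_int_O {T : ℝ} (hT : 0 < T) {a : ℝ → ℝ}
    (haB : ∃ K : ℝ, ∀ᵐ s ∂(volume.restrict (Set.Icc (0:ℝ) T)), |a s| ≤ K) {h : ℝ → E} {k : ℕ}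
    (hh : h =O[𝓝[>] (0:ℝ)] fun s => s ^ k) :
    (fun t => ∫ s in (0:ℝ)..t, a s • h s) =O[𝓝[>] (0:ℝ)] fun t => t ^ (k + 1) := by
  obtain ⟨K, hK⟩ := haB
  obtain ⟨C, hC, hb⟩ := hh.exists_nonneg
  exact IsBigO.of_bound _ (aux_int_bound hT hK hC hb.bound)

theorem aux_int_o {T : ℝ} (hT : 0 < T) {a : ℝ → ℝ}
    (haB : ∃ K : ℝ, ∀ᵐ s ∂(volume.restrict (Set.Icc (0:ℝ) T)), |a s| ≤ K) {h : ℝ → E} {k : ℕ}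
    (hh : h =o[𝓝[>] (0:ℝ)] fun s => s ^ k) :
    (fun t => ∫ s in (0:ℝ)..t, a s • h s) =o[𝓝[>] (0:ℝ)] fun t => t ^ (k + 1) := by
  obtain ⟨K, hK⟩ := haB
  rw [isLittleO_iff]
  intro ε hε
  have hp : 0 < ε / (|K| + 1) := by positivity
  filter_upwards [aux_int_bound hT hK hp.le (hh.bound hp)] with t ht
  refine ht.trans ?_
  gcongr
  rw [mul_div_assoc', div_le_iff₀ (by positivity)]
  nlinarith [abs_nonneg K]

theorem aux_parts {a b : ℝ → ℝ} {t : ℝ} (ha : IntervalIntegrable a volume 0 t)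
    (hb : IntervalIntegrable b volume 0 t) :
    (∫ s in (0:ℝ)..t, (∫ σ in (0:ℝ)..s, a σ) * b s) + (∫ s in (0:ℝ)..t, (∫ σ in (0:ℝ)..s, b σ) * a s)
      = (∫ s in (0:ℝ)..t, a s) * ∫ s in (0:ℝ)..t, b s := by
  have hA := ha.absolutelyContinuousOnInterval_intervalIntegral (c := 0) left_mem_uIcc
  have hB := hb.absolutelyContinuousOnInterval_intervalIntegral (c := 0) left_mem_uIcc
  have key := hA.integral_deriv_mul_eq_sub hB
  rw [← intervalIntegral.integral_add (hb.continuousOn_mul hA.continuousOn)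
    (ha.continuousOn_mul hB.continuousOn)]
  simp only [intervalIntegral.integral_same, zero_mul, sub_zero] at key
  rw [← key]
  refine intervalIntegral.integral_congr_ae ?_
  filter_upwards [ha.ae_hasDerivAt_integral, hb.ae_hasDerivAt_integral] with s h1 h2 hs
  have hs' := uIoc_subset_uIcc hs
  rw [(h1 hs' 0 left_mem_uIcc).deriv, (h2 hs' 0 left_mem_uIcc).deriv]
  ring

theorem aux_ii_sum {m : ℕ} {f : Fin m → ℝ → E} {a b : ℝ}
    (h : ∀ i ∈ Finset.univ, IntervalIntegrable (f i) volume a b) :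
    IntervalIntegrable (fun s => ∑ i, f i s) volume a b := by
  have := IntervalIntegrable.sum Finset.univ h
  simpa [Finset.sum_fn] using this

theorem aux_x_s11 [CompleteSpace E] {m : ℕ} {T : ℝ} (hT : 0 < T) {Ω : Set E} (hΩ : IsOpen Ω)
    {g : Fin m → E → E} (hgc : ∀ i, ContinuousOn (g i) Ω)
    {D : Fin m → E →L[ℝ] E} {x : ℝ → E} (hgD : ∀ i, HasFDerivAt (g i) (D i) (x 0))
    {a : Fin m → ℝ → ℝ}
    (haI : ∀ i, IntervalIntegrable (a i) volume 0 T)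
    (haB : ∀ i, ∃ K : ℝ, ∀ᵐ s ∂(volume.restrict (Set.Icc (0:ℝ) T)), |a i s| ≤ K)
    (hx : ∀ t ∈ Set.Icc (0:ℝ) T, x t = x 0 + ∫ s in (0:ℝ)..t, ∑ i, a i s • g i (x s))
    (hxΩ : ∀ t ∈ Set.Icc (0:ℝ) T, x t ∈ Ω) :
    (fun t => x t - x 0 - (∑ i, (∫ s in (0:ℝ)..t, a i s) • g i (x 0) +
      ∑ i, ∑ j, (∫ s in (0:ℝ)..t, (∫ σ in (0:ℝ)..s, a i σ) * a j s) • D j (g i (x 0))))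
      =o[𝓝[>] (0:ℝ)] fun t => t ^ 2 := by
  have hmono : ∀ {t}, t ∈ Icc (0:ℝ) T → ∀ i, IntervalIntegrable (a i) volume 0 t := fun {t} ht i =>
    (haI i).mono_set (by rw [uIcc_of_le hT.le, uIcc_of_le ht.1]; exact Icc_subset_Icc_right ht.2)
  -- integrability near zero
  obtain ⟨t1, ht1, ht1T, hint⟩ : ∃ t1, 0 < t1 ∧ t1 ≤ T ∧
      IntervalIntegrable (fun s => ∑ i, a i s • g i (x s)) volume 0 t1 := by
    by_contra hcon
    push Not at hcon
    have hxc : ∀ t ∈ Icc (0:ℝ) T, x t = x 0 := by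
      intro t ht
      rcases ht.1.eq_or_lt with h | h
      · rw [← h]
      · rw [hx t ht, intervalIntegral.integral_undef (hcon t h ht.2), add_zero]
    refine hcon T hT le_rfl ?_
    have : IntervalIntegrable (fun s => ∑ i, a i s • g i (x 0)) volume 0 T := by
      refine aux_ii_sum fun i _ => ?_
      exact (haI i).smul_continuousOn continuousOn_const
    refine this.congr ?_
    intro s hs
    rw [uIoc_of_le hT.le] at hs
    simp only
    rw [hxc s ⟨hs.1.le, hs.2⟩]
  have hsub : Icc (0:ℝ) t1 ⊆ Icc 0 T := Icc_subset_Icc_right ht1T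
  have hxcont : ContinuousOn x (Icc 0 t1) := by
    have h := intervalIntegral.continuousOn_primitive_interval' hint (a := 0) left_mem_uIcc
    rw [uIcc_of_le ht1.le] at h
    exact (continuousOn_const.add h).congr fun t ht => hx t (hsub ht)
  have hgx : ∀ i, ContinuousOn (fun s => g i (x s)) (Icc 0 t1) := fun i =>
    (hgc i).comp hxcont fun s hs => hxΩ s (hsub hs)
  have hAcont : ∀ i, ContinuousOn (fun t => ∫ s in (0:ℝ)..t, a i s) (Icc 0 t1) := fun i => by
    have h := intervalIntegral.continuousOn_primitive_interval' (hmono ⟨ht1.le, ht1T⟩ i) (a := 0)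
      left_mem_uIcc
    rwa [uIcc_of_le ht1.le] at h
  have hnear : ∀ᶠ t in 𝓝[>] (0:ℝ), t ∈ Ioc (0:ℝ) t1 := Ioc_mem_nhdsGT ht1
  have hx0 : Tendsto x (𝓝[>] 0) (𝓝 (x 0)) :=
    (hxcont 0 ⟨le_rfl, ht1.le⟩).mono_left
      (nhdsWithin_le_iff.2 (mem_of_superset hnear Ioc_subset_Icc_self))
  have hAO : ∀ i, (fun t => ∫ s in (0:ℝ)..t, a i s) =O[𝓝[>] (0:ℝ)] fun t => t := fun i => by
    have := aux_int_O hT (haB i) (h := fun _ => (1:ℝ)) (k := 0) (by simp only [pow_zero]; exact isBigO_refl _ _)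
    simpa using this
  -- first order
  have first : (fun t => x t - x 0 - ∑ i, (∫ s in (0:ℝ)..t, a i s) • g i (x 0))
      =o[𝓝[>] (0:ℝ)] fun t => t := by
    have h1 : ∀ i, (fun t => ∫ s in (0:ℝ)..t, a i s • (g i (x s) - g i (x 0)))
        =o[𝓝[>] (0:ℝ)] fun t => t := fun i => by
      have := aux_int_o hT (haB i) (h := fun s => g i (x s) - g i (x 0)) (k := 0) (by
        simp only [pow_zero]
        rw [isLittleO_one_iff]
        have := ((hgD i).continuousAt.tendsto.comp hx0).sub_const (g i (x 0))
        simpa using this)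
      simpa using this
    refine (IsLittleO.fun_sum (s := Finset.univ) fun i _ => h1 i).congr' ?_ EventuallyEq.rfl
    filter_upwards [hnear] with t ht
    have htT : t ∈ Icc (0:ℝ) T := ⟨ht.1.le, ht.2.trans ht1T⟩
    have hu : uIcc 0 t ⊆ Icc 0 t1 := by rw [uIcc_of_le ht.1.le]; exact Icc_subset_Icc_right ht.2
    have i1 : ∀ i, IntervalIntegrable (fun s => a i s • g i (x s)) volume 0 t := fun i =>
      (hmono htT i).smul_continuousOn ((hgx i).mono hu)
    have i2 : ∀ i, IntervalIntegrable (fun s => a i s • g i (x 0)) volume 0 t := fun i =>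
      (hmono htT i).smul_continuousOn continuousOn_const
    rw [hx t htT, intervalIntegral.integral_finsetSum fun i _ => i1 i, add_sub_cancel_left,
      ← Finset.sum_sub_distrib]
    refine Finset.sum_congr rfl fun i _ => ?_
    simp only [smul_sub]
    rw [intervalIntegral.integral_sub (i1 i) (i2 i), intervalIntegral.integral_smul_const]
  have hxO : (fun t => x t - x 0) =O[𝓝[>] (0:ℝ)] fun t => t := by
    have : (fun t => ∑ i, (∫ s in (0:ℝ)..t, a i s) • g i (x 0)) =O[𝓝[>] (0:ℝ)] fun t => t := by
      refine IsBigO.fun_sum fun i _ => ?_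
      simpa using (hAO i).smul (isBigO_const_const (g i (x 0)) (one_ne_zero (α := ℝ)) _)
    refine (first.isBigO.add this).congr_left fun t => ?_
    abel
  have second : ∀ j, (fun t => ∫ s in (0:ℝ)..t, a j s • (g j (x s) - g j (x 0) -
      ∑ i, (∫ σ in (0:ℝ)..s, a i σ) • D j (g i (x 0)))) =o[𝓝[>] (0:ℝ)] fun t => t ^ 2 := by
    intro j
    refine aux_int_o hT (haB j) (k := 1) ?_
    simp only [pow_one]
    have h1 : (fun s => g j (x s) - g j (x 0) - D j (x s - x 0)) =o[𝓝[>] (0:ℝ)] fun t => t :=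
      ((hasFDerivAt_iff_isLittleO.1 (hgD j)).comp_tendsto hx0).trans_isBigO hxO
    have h2 := ((D j).isBigO_comp _ (𝓝[>] (0:ℝ))).trans_isLittleO first
    refine (h1.add h2).congr_left fun t => ?_
    simp only [map_sub, map_sum, map_smul]
    abel
  refine (IsLittleO.fun_sum (s := Finset.univ) fun i _ => second i).congr' ?_ EventuallyEq.rfl
  filter_upwards [hnear] with t ht
  have htT : t ∈ Icc (0:ℝ) T := ⟨ht.1.le, ht.2.trans ht1T⟩
  have hu : uIcc 0 t ⊆ Icc 0 t1 := by rw [uIcc_of_le ht.1.le]; exact Icc_subset_Icc_right ht.2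
  have i1 : ∀ i, IntervalIntegrable (fun s => a i s • g i (x s)) volume 0 t := fun i =>
    (hmono htT i).smul_continuousOn ((hgx i).mono hu)
  have i2 : ∀ i, IntervalIntegrable (fun s => a i s • g i (x 0)) volume 0 t := fun i =>
    (hmono htT i).smul_continuousOn continuousOn_const
  have i3 : ∀ i j, IntervalIntegrable (fun s => a j s • (∫ σ in (0:ℝ)..s, a i σ) • D j (g i (x 0)))
      volume 0 t := fun i j =>
    (hmono htT j).smul_continuousOn (((hAcont i).mono hu).smul continuousOn_const)
  rw [hx t htT, intervalIntegral.integral_finsetSum fun i _ => i1 i, add_sub_cancel_left,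
    Finset.sum_comm (f := fun i j =>
      (∫ s in (0:ℝ)..t, (∫ σ in (0:ℝ)..s, a i σ) * a j s) • D j (g i (x 0))),
    ← Finset.sum_add_distrib, ← Finset.sum_sub_distrib]
  refine Finset.sum_congr rfl fun j _ => ?_
  simp only [smul_sub, Finset.smul_sum]
  rw [intervalIntegral.integral_sub ((i1 j).sub (i2 j)) (aux_ii_sum fun i _ => i3 i j),
    intervalIntegral.integral_sub (i1 j) (i2 j), intervalIntegral.integral_smul_const,
    intervalIntegral.integral_finsetSum fun i _ => i3 i j, sub_sub]
  congr 2
  refine Finset.sum_congr rfl fun i _ => ?_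
  rw [← intervalIntegral.integral_smul_const]
  simp only [smul_smul, mul_comm]

theorem aux_lex (M : ℕ) (F : Fin (M + 1) × Fin (M + 1) → E) :
    ((lexPairs M).map F).sum = ∑ i, ∑ j, if i < j then F (i, j) else 0 := by
  have h1 : ∀ L : List (Fin (M + 1)), ((L.foldr (fun i acc =>
      (((List.finRange (M + 1)).filter (fun j => decide (i < j))).map (fun j => (i, j))) ++ acc)
      []).map F).sum = (L.map fun i => ∑ j, if i < j then F (i, j) else 0).sum := by
    intro L
    induction L with
    | nil => simp
    | cons i L ih =>
      simp only [List.foldr_cons, List.map_append, List.sum_append, ih, List.map_cons, List.sum_cons]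
      congr 1
      have h2 : ∀ L : List (Fin (M + 1)), (((L.filter (fun j => decide (i < j))).map
          (fun j => (i, j))).map F).sum = (L.map fun j => if i < j then F (i, j) else 0).sum := by
        intro L
        induction L with
        | nil => simp
        | cons j L ih =>
          by_cases h : i < j <;> simp_all
      rw [h2, ← List.ofFn_eq_map, List.sum_ofFn]
  rw [lexPairs, h1, ← List.ofFn_eq_map, List.sum_ofFn]

theorem aux_lex_mem (M : ℕ) (p : Fin (M + 1) × Fin (M + 1)) (hp : p ∈ lexPairs M) : p.1 < p.2 := by
  have h1 : ∀ L : List (Fin (M + 1)), p ∈ L.foldr (fun i acc =>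
      (((List.finRange (M + 1)).filter (fun j => decide (i < j))).map (fun j => (i, j))) ++ acc)
      [] → p.1 < p.2 := by
    intro L
    induction L with
    | nil => simp
    | cons i L ih =>
      simp only [List.foldr_cons, List.mem_append, List.mem_map, List.mem_filter, decide_eq_true_eq]
      rintro (⟨j, ⟨_, hj⟩, rfl⟩ | h)
      · exact hj
      · exact ih h
  exact h1 _ hp

theorem aux_alg {m : ℕ} (A : Fin m → ℝ) (c : Fin m → Fin m → ℝ) (w : Fin m → Fin m → E)
    (hc : ∀ i j, c i j + c j i = A i * A j) :
    ∑ i, ∑ j, c i j • w j i = (∑ i, ∑ j, if i < j then c i j • (w j i - w i j) else 0) +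
      ∑ i, (A i ^ 2 / 2) • w i i + ∑ i, ∑ j, if i < j then (A i * A j) • w i j else 0 := by
  have h1 : ∑ i, ∑ j, c i j • w j i = ∑ i, ∑ j, ((if i < j then c i j • w j i else 0) +
      (if j < i then c i j • w j i else 0) + (if i = j then c i j • w j i else 0)) := by
    refine Finset.sum_congr rfl fun i _ => Finset.sum_congr rfl fun j _ => ?_
    rcases lt_trichotomy i j with h | h | h
    · simp [h, h.not_gt, h.ne]
    · simp [h]
    · simp [h, h.not_gt, h.ne']
  have h2 : ∀ i, c i i = A i ^ 2 / 2 := fun i => by have := hc i i; linarith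
  rw [h1]
  simp only [Finset.sum_add_distrib]
  rw [Finset.sum_comm (f := fun i j => if j < i then c i j • w j i else 0)]
  simp only [Finset.sum_ite_eq, Finset.mem_univ, if_true, h2]
  rw [add_right_comm _ _ (∑ i, ∑ j, if i < j then (A i * A j) • w i j else 0)]
  congr 1
  simp only [← Finset.sum_add_distrib]
  refine Finset.sum_congr rfl fun i _ => Finset.sum_congr rfl fun j _ => ?_
  split_ifs
  · rw [← hc i j]; module
  · simp

end aux2

/-- **Second-order exponential product expansion** (Proposition 4.3).
`Φ i` is the flow of `gᵢ` and `ΦB i j` the flow of `[gᵢ,gⱼ]`;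
`A i t = ∫₀ᵗ aⁱ` and `A2 i j t = ∫₀ᵗ Aⁱ aʲ`. -/
theorem second_order_exponential_expansion
    {n M : ℕ} {T : ℝ} (hT : 0 < T)
    (Ω : Set (Fin n → ℝ)) (hΩ : IsOpen Ω)
    (g : Fin (M + 1) → (Fin n → ℝ) → Fin n → ℝ)
    (hg : ∀ i, ContDiffOn ℝ 2 (g i) Ω)
    (a : Fin (M + 1) → ℝ → ℝ)
    (haI : ∀ i, IntervalIntegrable (a i) volume 0 T)
    (haB : ∀ i, ∃ K : ℝ, ∀ᵐ s ∂(volume.restrict (Set.Icc (0:ℝ) T)), |a i s| ≤ K)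
    (x : ℝ → Fin n → ℝ)
    (hx : ∀ t ∈ Set.Icc (0:ℝ) T, x t = x 0 + ∫ s in (0:ℝ)..t, ∑ i, a i s • g i (x s))
    (hxΩ : ∀ t ∈ Set.Icc (0:ℝ) T, x t ∈ Ω)
    -- the flows of the `gᵢ` and of the brackets `[gᵢ,gⱼ]`, assumed defined
    (Φ : Fin (M + 1) → ℝ → (Fin n → ℝ) → Fin n → ℝ)
    (hΦ0 : ∀ i y, Φ i 0 y = y)
    (hΦ : ∀ i y τ, HasDerivAt (fun τ' => Φ i τ' y) (g i (Φ i τ y)) τ)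
    (ΦB : Fin (M + 1) → Fin (M + 1) → ℝ → (Fin n → ℝ) → Fin n → ℝ)
    (hΦB0 : ∀ i j y, ΦB i j 0 y = y)
    (hΦB : ∀ i j, i < j → ∀ y τ,
      HasDerivAt (fun τ' => ΦB i j τ' y) (lieBracket (g i) (g j) (ΦB i j τ y)) τ) :
    (fun t : ℝ => x t -
        (((List.ofFn fun i : Fin (M + 1) => Φ i (∫ s in (0:ℝ)..t, a i s)).foldr (· ∘ ·) id) ∘
          (((lexPairs M).map fun p =>
            ΦB p.1 p.2 (∫ s in (0:ℝ)..t, (∫ σ in (0:ℝ)..s, a p.1 σ) * a p.2 s)).foldr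
              (· ∘ ·) id)) (x 0))
      =o[nhdsWithin 0 (Set.Ioi 0)] (fun t => t ^ 2) := by

  have h0 : (0:ℝ) ∈ Icc (0:ℝ) T := ⟨le_rfl, hT.le⟩
  have hx0 : x 0 ∈ Ω := hxΩ 0 h0
  have hnhds : Ω ∈ 𝓝 (x 0) := hΩ.mem_nhds hx0
  have hgC : ∀ i, ContDiffAt ℝ 2 (g i) (x 0) := fun i => (hg i).contDiffAt hnhds
  have hgD : ∀ i, HasFDerivAt (g i) (fderiv ℝ (g i) (x 0)) (x 0) := fun i =>
    ((hgC i).differentiableAt (by norm_num)).hasFDerivAt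
  have hfc : ∀ i, ContinuousAt (fderiv ℝ (g i)) (x 0) := fun i =>
    (hgC i).continuousAt_fderiv (by norm_num)
  have hlc : ∀ i j, ContinuousAt (lieBracket (g i) (g j)) (x 0) := fun i j =>
    ((hfc j).clm_apply (hgD i).continuousAt).sub ((hfc i).clm_apply (hgD j).continuousAt)
  have hl : Tendsto (fun t : ℝ => t) (𝓝[>] (0:ℝ)) (𝓝 0) := tendsto_id.mono_left nhdsWithin_le_nhds
  have hAO : ∀ i, (fun t => ∫ s in (0:ℝ)..t, a i s) =O[𝓝[>] (0:ℝ)] fun t => t := fun i => by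
    have := aux_int_O hT (haB i) (h := fun _ => (1:ℝ)) (k := 0) (by simp only [pow_zero]; exact isBigO_refl _ _)
    simpa using this
  have hAAO : ∀ i j, (fun t => ∫ s in (0:ℝ)..t, (∫ σ in (0:ℝ)..s, a i σ) * a j s)
      =O[𝓝[>] (0:ℝ)] fun t => t ^ 2 := fun i j => by
    have := aux_int_O hT (haB j) (h := fun s => ∫ σ in (0:ℝ)..s, a i σ) (k := 1)
      (by simpa using hAO i)
    simpa [mul_comm] using this
  have hX := aux_x_s11 hT hΩ (fun i => (hg i).continuousOn) hgD haI haB hx hxΩ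
  obtain ⟨hB1, hB2⟩ := aux_listB (lexPairs M) (f := fun p => lieBracket (g p.1) (g p.2))
    (x0 := x 0) (φ := fun p => ΦB p.1 p.2)
    (τ := fun p t => ∫ s in (0:ℝ)..t, (∫ σ in (0:ℝ)..s, a p.1 σ) * a p.2 s) hl
    (fun p _ => hlc _ _) (fun p _ => hΦB0 _ _) (fun p hp => hΦB _ _ (aux_lex_mem M p hp))
    (fun p _ => hAAO _ _)
  have hA := aux_listA hl hB2 hB1 (M + 1) hgD hΦ0 hΦ hAO
  refine (hX.sub hA).congr' ?_ EventuallyEq.rfl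
  have hnear : ∀ᶠ t in 𝓝[>] (0:ℝ), t ∈ Ioc (0:ℝ) T := Ioc_mem_nhdsGT hT
  filter_upwards [hnear] with t ht
  have hmono : ∀ i, IntervalIntegrable (a i) volume 0 t := fun i =>
    (haI i).mono_set (by rw [uIcc_of_le hT.le, uIcc_of_le ht.1.le]; exact Icc_subset_Icc_right ht.2)
  have alg := aux_alg (fun i => ∫ s in (0:ℝ)..t, a i s)
    (fun i j => ∫ s in (0:ℝ)..t, (∫ σ in (0:ℝ)..s, a i σ) * a j s)
    (fun i j => fderiv ℝ (g i) (x 0) (g j (x 0))) (fun i j => aux_parts (hmono i) (hmono j))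
  rw [aux_lex]
  simp only [lieBracket, Function.comp_apply] at alg ⊢
  rw [alg]
  abel
end
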